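/- arXiv:1603.09266 — 8 statements merged into one kernel-verified Lean document; each statement's English description precedes it below -/
import Mathlib

section
/- The decomposition of a little-oh polynomial is unique: let r, s ∈ ℝ^n, let β₁, …, β_l ∈ ℝ^n \ {0} with exponents 0 < b₁ < b₂ < ⋯ < b_l ≤ 1, and let γ₁, …, γ_m ∈ ℝ^n \ {0} with exponents 0 < c₁ < c₂ < ⋯ < c_m ≤ 1. If ‖(r + Σ_{i=1}^l βᵢ t^{bᵢ}) − (s + Σ_{j=1}^m γⱼ t^{cⱼ})‖ = o(t) as t → 0⁺, then r = s, l = m, and bᵢ = cᵢ and βᵢ = γᵢ for every i. -/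
/-!
An expression `r + ∑ᵢ t^{bᵢ} βᵢ` is recorded as the finitely supported function on exponents
taking the value `r` at `0` and `βᵢ` at `bᵢ`. Applied to the difference of the two given
expressions, `eq_zero_of_isLittleO` says that a generalized polynomial with exponents at most `1`
which is `o(t)` vanishes identically: dividing by `t^a`, with `a` the least exponent occurring,
the sum tends to the coefficient of `t^a`, while `o(t) / t^a` tends to `0` because `a ≤ 1`.
Hence the two coefficient functions agree. Evaluating at `0` gives `r = s`; their nonzero
exponents form the ranges of `b` and of `c`, so these strictly increasing families
coincide, and evaluating at `bᵢ` gives `βᵢ = γᵢ`.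
-/

open Filter Asymptotics Topology

/-- A generalized polynomial with exponents at most `1` that is `o(t)` as `t → 0⁺` has only zero
coefficients. -/
lemma eq_zero_of_isLittleO {E : Type*} [NormedAddCommGroup E] [NormedSpace ℝ E] (D : ℝ →₀ E)
    (hD : ∀ a, D a ≠ 0 → a ≤ 1)
    (h : (fun t : ℝ => D.sum fun a v => t ^ a • v) =o[𝓝[>] (0 : ℝ)] fun t => t) : D = 0 := by
  by_contra hne
  have hsupp : D.support.Nonempty := Finsupp.support_nonempty_iff.mpr hne
  set a := D.support.min' hsupp
  have ha : a ∈ D.support := D.support.min'_mem hsupp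
  have hDa : D a ≠ 0 := Finsupp.mem_support_iff.mp ha
  have ha1 : a ≤ 1 := hD a hDa
  have hlim : Tendsto (fun t : ℝ => ∑ e ∈ D.support, t ^ (e - a) • D e) (𝓝[>] 0)
      (𝓝 (∑ e ∈ D.support, if e = a then D e else 0)) := by
    refine tendsto_finsetSum _ fun e he => ?_
    split_ifs with hea
    · simp [hea]
    · have hlt : 0 < e - a :=
        sub_pos.mpr (lt_of_le_of_ne (D.support.min'_le e he) (Ne.symm hea))
      have h0 : Tendsto (fun t : ℝ => t ^ (e - a)) (𝓝[>] 0) (𝓝 0) := by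
        have := (Real.continuousAt_rpow_const 0 (e - a) (Or.inr hlt.le)).tendsto
        rw [Real.zero_rpow hlt.ne'] at this
        exact this.mono_left nhdsWithin_le_nhds
      simpa using h0.smul_const (D e)
  rw [Finset.sum_ite_eq' D.support a, if_pos ha] at hlim
  have hzero : Tendsto (fun t : ℝ => ∑ e ∈ D.support, t ^ (e - a) • D e) (𝓝[>] 0) (𝓝 0) := by
    rw [← isLittleO_one_iff ℝ]
    have hscaled := (isBigO_refl (fun t : ℝ => t ^ (-a)) (𝓝[>] 0)).smul_isLittleO h
    have hbdd : (fun t : ℝ => t ^ (-a) • t) =O[𝓝[>] 0] fun _ => (1 : ℝ) := by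
      refine IsBigO.of_bound 1 ?_
      filter_upwards [Ioo_mem_nhdsGT (zero_lt_one (α := ℝ))] with t ht
      have : t ^ (-a) • t = t ^ (1 - a) := by
        rw [smul_eq_mul, sub_eq_neg_add, Real.rpow_add ht.1, Real.rpow_one]
      rw [this, Real.norm_of_nonneg (Real.rpow_nonneg ht.1.le _)]
      simpa using Real.rpow_le_one ht.1.le ht.2.le (sub_nonneg.mpr ha1)
    refine (hscaled.trans_isBigO hbdd).congr' ?_ EventuallyEq.rfl
    filter_upwards [self_mem_nhdsWithin] with t ht
    simp only [Finsupp.sum, Finset.smul_sum, smul_smul]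
    refine Finset.sum_congr rfl fun e _ => ?_
    rw [← Real.rpow_add ht, neg_add_eq_sub]
  exact hDa (tendsto_nhds_unique hlim hzero)

/-- The coefficients of `r + ∑ᵢ t^{bᵢ} βᵢ`, as a finitely supported function of the exponent; the
constant term is the coefficient at exponent `0`. -/
noncomputable def expCoeff {E : Type*} [AddCommMonoid E] {l : ℕ} (r : E) (β : Fin l → E)
    (b : Fin l → ℝ) : ℝ →₀ E :=
  Finsupp.single 0 r + ∑ i, Finsupp.single (b i) (β i)

section expCoeff

variable {E : Type*} [NormedAddCommGroup E] {l : ℕ} (r : E) (β : Fin l → E) {b : Fin l → ℝ}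

lemma expCoeff_sum [NormedSpace ℝ E] (b : Fin l → ℝ) (t : ℝ) :
    ((expCoeff r β b).sum fun a v => t ^ a • v) = r + ∑ i, t ^ b i • β i := by
  have h0 : ∀ a : ℝ, t ^ a • (0 : E) = 0 := fun a => smul_zero _
  have hadd : ∀ (a : ℝ) (v w : E), t ^ a • (v + w) = t ^ a • v + t ^ a • w :=
    fun a v w => smul_add _ v w
  rw [expCoeff, Finsupp.sum_add_index' h0 hadd, ← Finsupp.sum_finsetSum_index h0 hadd]
  simp [Finsupp.sum_single_index]

lemma expCoeff_zero (hb0 : ∀ i, 0 < b i) : expCoeff r β b 0 = r := by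
  simp [expCoeff, (hb0 _).ne']

lemma expCoeff_apply (hb : StrictMono b) (hb0 : ∀ i, 0 < b i) (i : Fin l) :
    expCoeff r β b (b i) = β i := by
  simp [expCoeff, Finsupp.single_apply, (hb0 _).ne, hb.injective.eq_iff]

lemma expCoeff_of_notMem {x : ℝ} (hx0 : x ≠ 0) (hx : x ∉ Set.range b) :
    expCoeff r β b x = 0 := by
  have hx' : ∀ i, b i ≠ x := fun i hi => hx ⟨i, hi⟩
  simp [expCoeff, hx0.symm, hx']

lemma le_one_of_expCoeff_ne_zero (hb1 : ∀ i, b i ≤ 1) {x : ℝ} (hx : expCoeff r β b x ≠ 0) :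
    x ≤ 1 := by
  by_cases hx0 : x = 0
  · simp [hx0]
  by_cases hxb : x ∈ Set.range b
  · obtain ⟨i, rfl⟩ := hxb
    exact hb1 i
  · exact absurd (expCoeff_of_notMem r β hx0 hxb) hx

lemma range_eq_expCoeff (hβ : ∀ i, β i ≠ 0) (hb : StrictMono b) (hb0 : ∀ i, 0 < b i) :
    Set.range b = {x | x ≠ 0 ∧ expCoeff r β b x ≠ 0} := by
  ext x
  constructor
  · rintro ⟨i, rfl⟩
    exact ⟨(hb0 i).ne', by rw [expCoeff_apply r β hb hb0]; exact hβ i⟩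
  · rintro ⟨hx0, hx⟩
    by_contra hxb
    exact hx (expCoeff_of_notMem r β hx0 hxb)

end expCoeff


/-- Uniqueness of the decomposition of a little-oh polynomial: if two expressions
`r + ∑ᵢ βᵢ t^{bᵢ}` and `s + ∑ⱼ γⱼ t^{cⱼ}` (with nonzero coefficients and strictly
increasing exponents in `(0,1]`) differ by `o(t)` as `t → 0⁺`, then they coincide. -/
theorem littleOhPoly_decomposition_unique {n : ℕ}
    (r s : EuclideanSpace ℝ (Fin n))
    {l m : ℕ} (β : Fin l → EuclideanSpace ℝ (Fin n)) (b : Fin l → ℝ)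
    (γ : Fin m → EuclideanSpace ℝ (Fin n)) (c : Fin m → ℝ)
    (hβ : ∀ i, β i ≠ 0) (hb : StrictMono b) (hb0 : ∀ i, 0 < b i) (hb1 : ∀ i, b i ≤ 1)
    (hγ : ∀ j, γ j ≠ 0) (hc : StrictMono c) (hc0 : ∀ j, 0 < c j) (hc1 : ∀ j, c j ≤ 1)
    (h : (fun t : ℝ => (r + ∑ i, (t ^ (b i)) • β i) - (s + ∑ j, (t ^ (c j)) • γ j))
      =o[𝓝[>] (0 : ℝ)] fun t => t) :
    r = s ∧ ∃ hlm : l = m, ∀ i : Fin l,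
      b i = c (Fin.cast hlm i) ∧ β i = γ (Fin.cast hlm i) := by
  have hcoeff : expCoeff r β b = expCoeff s γ c := by
    rw [← sub_eq_zero]
    refine eq_zero_of_isLittleO _ (fun a ha => ?_) (h.congr_left fun t => ?_)
    · by_cases hba : expCoeff r β b a = 0
      · refine le_one_of_expCoeff_ne_zero s γ hc1 (x := a) fun hca => ha ?_
        rw [Finsupp.sub_apply, hba, hca, sub_zero]
      · exact le_one_of_expCoeff_ne_zero r β hb1 hba
    · rw [Finsupp.sum_sub_index fun a v w => smul_sub _ v w, expCoeff_sum, expCoeff_sum]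
  have hrange : Set.range b = Set.range c := by
    rw [range_eq_expCoeff r β hβ hb hb0, range_eq_expCoeff s γ hγ hc hc0, hcoeff]
  have hlm : l = m := by
    rw [← Nat.card_fin l, ← Nat.card_fin m, ← Nat.card_range_of_injective hb.injective,
      ← Nat.card_range_of_injective hc.injective, hrange]
  subst hlm
  have hbc : b = c := (hb.range_inj hc).mp hrange
  subst hbc
  refine ⟨?_, rfl, fun i => ⟨rfl, ?_⟩⟩
  · rw [← expCoeff_zero r β hb0, hcoeff, expCoeff_zero s γ hb0]
  · rw [← expCoeff_apply r β hb hb0 i, hcoeff, expCoeff_apply s γ hb hb0 i]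
    rfl
end

section
/- The little-oh polynomials are closed under pointwise addition and multiplication: if x, y : ℝ → ℝ are little-oh polynomials, then the functions t ↦ x(t) + y(t) and t ↦ x(t)·y(t) are little-oh polynomials. -/
/-!
Write `x = P + e` and `y = Q + f` near `0⁺`, where `P`, `Q` are finite sums of a constant and positive
real powers of `t`, and `e`, `f` are `o(t)`. Then `x + y = (P + Q) + (e + f)` and
`x * y = P * Q + (e * Q + P * f + e * f)`. The product `P * Q` is again of the same shape because
`t ^ a * t ^ b = t ^ (a + b)` for `t > 0`, and the error term is `o(t)` because `P`, `Q` and `f` are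
bounded near `0⁺`. The bookkeeping of exponents is done over arbitrary finite index types
(`IsLittleOhPoly.of_fintype`): a disjoint sum for `x + y`, and for `x * y` the two original index
sets together with their product.
-/

open Filter Asymptotics Topology

/-- A function `x : ℝ → ℝ` is a little-oh polynomial if there are `r`, coefficients `α i`
and positive exponents `a i` such that `x t - r - ∑ i, α i * t ^ (a i)` is `o(t)` as `t → 0⁺`. -/
def IsLittleOhPoly (x : ℝ → ℝ) : Prop :=
  ∃ (r : ℝ) (k : ℕ) (α : Fin k → ℝ) (a : Fin k → ℝ),
    (∀ i, 0 < a i) ∧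
    (fun t => x t - r - ∑ i, α i * t ^ (a i)) =o[𝓝[>] (0 : ℝ)] fun t => t

theorem IsLittleOhPoly.of_fintype {ι : Type} [Fintype ι] {x : ℝ → ℝ} (r : ℝ) (α a : ι → ℝ)
    (ha : ∀ i, 0 < a i)
    (h : (fun t => x t - r - ∑ i, α i * t ^ (a i)) =o[𝓝[>] (0 : ℝ)] fun t => t) :
    IsLittleOhPoly x := by
  let σ := (Fintype.equivFin ι).symm
  refine ⟨r, Fintype.card ι, α ∘ σ, a ∘ σ, fun i => ha _, ?_⟩
  refine h.congr_left fun t => ?_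
  congr 1
  exact (Equiv.sum_comp σ fun i => α i * t ^ (a i)).symm

theorem isBigO_one_const_add_sum_rpow {ι : Type} [Fintype ι] (r : ℝ) (α a : ι → ℝ)
    (ha : ∀ i, 0 < a i) :
    (fun t : ℝ => r + ∑ i, α i * t ^ (a i)) =O[𝓝[>] (0 : ℝ)] fun _ => (1 : ℝ) := by
  have hc : Continuous fun t : ℝ => r + ∑ i, α i * t ^ (a i) :=
    continuous_const.add <| continuous_finsetSum _ fun i _ =>
      continuous_const.mul (Real.continuous_rpow_const (ha i).le)
  exact ((hc.tendsto 0).mono_left nhdsWithin_le_nhds).isBigO_one ℝ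

/-- Little-oh polynomials are closed under pointwise addition and multiplication. -/
theorem isLittleOhPoly_add_mul (x y : ℝ → ℝ)
    (hx : IsLittleOhPoly x) (hy : IsLittleOhPoly y) :
    IsLittleOhPoly (fun t => x t + y t) ∧ IsLittleOhPoly (fun t => x t * y t) := by
  obtain ⟨r, k, α, a, ha, he⟩ := hx
  obtain ⟨s, l, β, b, hb, hf⟩ := hy
  constructor
  · refine IsLittleOhPoly.of_fintype (ι := Fin k ⊕ Fin l) (r + s) (Sum.elim α β) (Sum.elim a b)
      (by rintro (i | j); exacts [ha i, hb j]) ?_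
    refine (he.add hf).congr_left fun t => ?_
    simp only [Fintype.sum_sum_type, Sum.elim_inl, Sum.elim_inr]
    ring
  · refine IsLittleOhPoly.of_fintype (ι := (Fin k ⊕ Fin l) ⊕ (Fin k × Fin l)) (r * s)
      (Sum.elim (Sum.elim (fun i => s * α i) (fun j => r * β j)) (fun p => α p.1 * β p.2))
      (Sum.elim (Sum.elim a b) (fun p => a p.1 + b p.2))
      (by rintro ((i | j) | p); exacts [ha i, hb j, add_pos (ha p.1) (hb p.2)]) ?_
    have hP := isBigO_one_const_add_sum_rpow r α a ha
    have hQ := isBigO_one_const_add_sum_rpow s β b hb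
    have ht : (fun t : ℝ => t) =O[𝓝[>] (0 : ℝ)] fun _ => (1 : ℝ) :=
      ((continuous_id.tendsto (0 : ℝ)).mono_left nhdsWithin_le_nhds).isBigO_one ℝ
    have hmain := ((he.mul_isBigO hQ).add (hf.mul_isBigO hP)).add
      (he.mul_isBigO (hf.isBigO.trans ht))
    simp only [mul_one] at hmain
    refine hmain.congr' ?_ EventuallyEq.rfl
    filter_upwards [self_mem_nhdsWithin] with t ht0
    have hprod : ∑ p : Fin k × Fin l, α p.1 * β p.2 * t ^ (a p.1 + b p.2)
        = (∑ i, α i * t ^ (a i)) * ∑ j, β j * t ^ (b j) := by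
      rw [Finset.sum_mul_sum, ← Finset.univ_product_univ, Finset.sum_product]
      refine Finset.sum_congr rfl fun i _ => Finset.sum_congr rfl fun j _ => ?_
      rw [Real.rpow_add ht0]
      ring
    simp only [Fintype.sum_sum_type, Sum.elim_inl, Sum.elim_inr, hprod, mul_assoc s, mul_assoc r,
      ← Finset.mul_sum]
    ring
end

section
/- The o(t)-equivalence of little-oh polynomials is a congruence for multiplication: if x, x', y, y' : ℝ → ℝ are little-oh polynomials with x(t) − x'(t) = o(t) and y(t) − y'(t) = o(t) as t → 0⁺, then x(t)·y(t) − x'(t)·y'(t) = o(t) as t → 0⁺. -/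
/-!
Write `x y - x' y' = (x - x') y + x' (y - y')`. A little-oh polynomial is bounded near `0⁺`,
since it tends to its constant term `r` (all exponents being positive), and a bounded function
times an `o(t)` function is `o(t)`.
-/

open Filter Asymptotics Topology

/-- Such an `x` converges at `0⁺`, hence is bounded there. -/
lemma IsLittleOhPoly.isBigO_one {x : ℝ → ℝ} (hx : IsLittleOhPoly x) :
    x =O[𝓝[>] (0 : ℝ)] fun _ => (1 : ℝ) := by
  obtain ⟨r, k, α, a, ha, h⟩ := hx
  have hid : Tendsto (fun t : ℝ => t) (𝓝[>] 0) (𝓝 0) :=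
    tendsto_nhdsWithin_of_tendsto_nhds tendsto_id
  have hsum : Tendsto (fun t : ℝ => ∑ i, α i * t ^ (a i)) (𝓝[>] 0) (𝓝 (∑ i, α i * 0 ^ (a i))) :=
    tendsto_finsetSum _ fun i _ => (hid.rpow_const (Or.inr (ha i).le)).const_mul _
  have hlim := ((h.isBigO.trans_tendsto hid).add_const r).add hsum
  refine (hlim.congr fun t => ?_).isBigO_one ℝ
  ring

/-- The `o(t)`-equivalence of little-oh polynomials is a congruence for multiplication. -/
theorem littleOhPoly_mul_congr (x x' y y' : ℝ → ℝ)
    (hx : IsLittleOhPoly x) (hx' : IsLittleOhPoly x')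
    (hy : IsLittleOhPoly y) (hy' : IsLittleOhPoly y')
    (hxx : (fun t => x t - x' t) =o[𝓝[>] (0 : ℝ)] fun t => t)
    (hyy : (fun t => y t - y' t) =o[𝓝[>] (0 : ℝ)] fun t => t) :
    (fun t => x t * y t - x' t * y' t) =o[𝓝[>] (0 : ℝ)] fun t => t := by
  have h₁ := hxx.mul_isBigO hy.isBigO_one
  have h₂ := hx'.isBigO_one.mul_isLittleO hyy
  simp only [mul_one, one_mul] at h₁ h₂
  exact (h₁.add h₂).congr_left fun t => by ring
end

section
/- Every infinitesimal Fermat real is nilpotent: if x : ℝ → ℝ is a little-oh polynomial whose standard part is 0, then there exists m ∈ ℕ such that x(t)^m = o(t) as t → 0⁺. -/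
/-! Let `c ∈ (0, 1]` be a lower bound for the finitely many exponents. Near `0⁺` each `t ^ (a i)`
and `t` itself are `O(t ^ c)`, hence so is `x t - r`. As `t ^ c → 0`, uniqueness of limits gives
`r = 0`, so `x t = O(t ^ c)`; choosing `m` with `m * c > 1` yields
`x t ^ m = O(t ^ (c * m)) = o(t)`. -/

open Filter Asymptotics Topology

theorem rpow_isBigO_rpow_nhdsGT_zero {c b : ℝ} (hc : 0 < c) (h : c ≤ b) :
    (fun t : ℝ => t ^ b) =O[𝓝[>] (0 : ℝ)] fun t => t ^ c :=
  (IsBigO.rpow_rpow_nhdsGE_zero_of_le h (hc.trans_le h).ne').mono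
    (nhdsWithin_mono _ Set.Ioi_subset_Ici_self)

theorem tendsto_rpow_nhdsGT_zero {c : ℝ} (hc : 0 < c) :
    Tendsto (fun t : ℝ => t ^ c) (𝓝[>] (0 : ℝ)) (𝓝 0) := by
  have h := (Real.continuousAt_rpow_const (0 : ℝ) c (Or.inr hc.le)).tendsto
  rw [Real.zero_rpow hc.ne'] at h
  exact h.mono_left nhdsWithin_le_nhds

/-- Every infinitesimal Fermat real is nilpotent: a little-oh polynomial with
standard part `0` has some power which is `o(t)` as `t → 0⁺`. -/
theorem littleOhPoly_nilpotent (x : ℝ → ℝ)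
    (hx : IsLittleOhPoly x)
    (h0 : Filter.Tendsto x (𝓝[>] (0 : ℝ)) (𝓝 0)) :
    ∃ m : ℕ, (fun t => x t ^ m) =o[𝓝[>] (0 : ℝ)] fun t => t := by
  obtain ⟨r, k, α, a, ha, hr⟩ := hx
  obtain ⟨c, ⟨hca, hc1⟩, hc⟩ : ∃ c : ℝ, ((∀ i, c ≤ a i) ∧ c ≤ 1) ∧ 0 < c := by
    have h1 : ∀ᶠ c in 𝓝[>] (0 : ℝ), ∀ i, c ≤ a i :=
      eventually_all.2 fun i => nhdsWithin_le_nhds (Iic_mem_nhds (ha i))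
    have h2 : ∀ᶠ c in 𝓝[>] (0 : ℝ), c ≤ 1 := nhdsWithin_le_nhds (Iic_mem_nhds one_pos)
    exact ((h1.and h2).and self_mem_nhdsWithin).exists
  have hid : (fun t : ℝ => t) =O[𝓝[>] (0 : ℝ)] fun t => t ^ c := by
    simpa using rpow_isBigO_rpow_nhdsGT_zero hc hc1
  have hsum : (fun t : ℝ => ∑ i, α i * t ^ (a i)) =O[𝓝[>] (0 : ℝ)] fun t => t ^ c :=
    IsBigO.fun_sum fun i _ => (rpow_isBigO_rpow_nhdsGT_zero hc (hca i)).const_mul_left _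
  have hxr : (fun t => x t - r) =O[𝓝[>] (0 : ℝ)] fun t => t ^ c := by
    simpa using (hr.isBigO.trans hid).add hsum
  have hr0 : r = 0 := by
    have h1 := hxr.trans_tendsto (tendsto_rpow_nhdsGT_zero hc)
    have h2 := tendsto_nhds_unique h1 (h0.sub_const r)
    linarith
  subst hr0
  simp only [sub_zero] at hxr
  obtain ⟨m, hm⟩ := exists_nat_gt (1 / c)
  have hcm : 0 < c * m - 1 := by
    rw [div_lt_iff₀ hc] at hm
    linarith
  refine ⟨m, (hxr.pow m).trans_isLittleO ?_⟩
  -- `(t ^ c) ^ m = t ^ (c * m - 1) * t` for `t > 0`, and the first factor tends to `0`.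
  have h1 := ((isLittleO_one_iff ℝ).2 (tendsto_rpow_nhdsGT_zero hcm)).mul_isBigO
    (isBigO_refl (fun t : ℝ => t) (𝓝[>] (0 : ℝ)))
  refine h1.congr' ?_ (by simp)
  filter_upwards [self_mem_nhdsWithin] with t ht
  have ht : 0 < t := ht
  rw [← Real.rpow_mul_natCast ht.le, Real.rpow_sub_one ht.ne', div_mul_cancel₀ _ ht.ne']
end

section
/- Characterization of m-th order nilpotency of infinitesimals: let x : ℝ → ℝ be a little-oh polynomial with standard part 0 and let m ≥ 1 be a natural number. Then x(t)^m = o(t) as t → 0⁺ if and only if x(t) = o(t^{1/m}) as t → 0⁺. (In particular, for m = 2 this characterizes the first-order infinitesimals D = {x ∈ •ℝ : x² = 0}.) -/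
open Filter Asymptotics Topology

/-- Characterization of `m`-th order nilpotency of infinitesimals:
for a little-oh polynomial `x` with standard part `0` and `m ≥ 1`,
`x(t)^m = o(t)` iff `x(t) = o(t^{1/m})` as `t → 0⁺`. -/
theorem littleOhPoly_pow_littleO_iff (x : ℝ → ℝ) (m : ℕ)
    (hm : 1 ≤ m)
    (hx : IsLittleOhPoly x)
    (h0 : Filter.Tendsto x (𝓝[>] (0 : ℝ)) (𝓝 0)) :
    (fun t => x t ^ m) =o[𝓝[>] (0 : ℝ)] (fun t => t) ↔
      x =o[𝓝[>] (0 : ℝ)] fun t : ℝ => t ^ ((1 : ℝ) / m) := by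
  have hm0 : m ≠ 0 := Nat.one_le_iff_ne_zero.mp hm
  -- Only `t > 0` matters, and there `t` is the `m`-th power of `t ^ (1 / m)`.
  have key : (fun t : ℝ => (t ^ ((1 : ℝ) / m)) ^ m) =ᶠ[𝓝[>] (0 : ℝ)] fun t => t := by
    filter_upwards [self_mem_nhdsWithin] with t ht
    rw [one_div, Real.rpow_inv_natCast_pow (le_of_lt ht) hm0]
  -- Little-oh is preserved and reflected by taking `m`-th powers.
  exact ⟨fun h => IsLittleO.of_pow (h.trans_eventuallyEq key.symm) hm0,
    fun h => (h.pow hm).trans_eventuallyEq key⟩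
end

section
/- Totality of the order on Fermat reals (trichotomy at the level of representatives): for any two little-oh polynomials x, y : ℝ → ℝ, exactly one of the following holds: (i) x(t) − y(t) = o(t) as t → 0⁺; (ii) x(t) − y(t) is not o(t) as t → 0⁺ and there exists ε > 0 such that x(t) < y(t) for all t ∈ (0, ε); (iii) x(t) − y(t) is not o(t) as t → 0⁺ and there exists ε > 0 such that x(t) > y(t) for all t ∈ (0, ε). -/
/-!
The difference `z = x - y` of two little-oh polynomials is, up to `o(t)`, a finite real combination
of distinct powers `t ^ b` (constants being `t ^ 0`). Let `b` be the smallest exponent with a nonzero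
coefficient `c`. If there is none, or `b > 1`, then `z = o(t)`. If `b ≤ 1`, every other term as well
as the `o(t)` error is `o(t ^ b)`, so `z - c * t ^ b = o(t ^ b)` and `z` has the sign of `c` on some
interval `(0, ε)` (`isLittleO_or_eventually_sign`). The three cases exclude each other because
`x < y` and `x > y` cannot both hold near `0`.

Formal combinations of powers are encoded as finitely supported functions `ℝ →₀ ℝ` from exponents to
coefficients, so that equal exponents are merged and cancelled automatically on subtraction.
-/

open Filter Asymptotics Topology

/-- The function `t ↦ ∑ b, h b * t ^ b` attached to a finitely supported family of coefficients `h`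
indexed by real exponents, as a linear map in `h`. -/
noncomputable def powComb : (ℝ →₀ ℝ) →ₗ[ℝ] (ℝ → ℝ) :=
  Finsupp.linearCombination ℝ fun b t => t ^ b

lemma powComb_apply (h : ℝ →₀ ℝ) (t : ℝ) : powComb h t = ∑ b ∈ h.support, h b * t ^ b := by
  simp [powComb, Finsupp.linearCombination_apply, Finsupp.sum]

lemma powComb_single (b c t : ℝ) : powComb (Finsupp.single b c) t = c * t ^ b := by
  simp [powComb]

lemma rpow_isLittleO_rpow {a b : ℝ} (hab : a < b) :
    (fun t : ℝ => t ^ b) =o[𝓝[>] 0] fun t : ℝ => t ^ a := by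
  have hpos : ∀ᶠ t : ℝ in 𝓝[>] 0, 0 < t := eventually_mem_nhdsWithin
  rw [isLittleO_iff_tendsto' (hpos.mono fun t ht h0 => absurd h0 (Real.rpow_pos_of_pos ht a).ne')]
  have hlim : Tendsto (fun t : ℝ => t ^ (b - a)) (𝓝[>] 0) (𝓝 0) := by
    have hc := (Real.continuousAt_rpow_const 0 (b - a) (Or.inr (sub_nonneg.2 hab.le))).tendsto
    rw [Real.zero_rpow (sub_pos.2 hab).ne'] at hc
    exact hc.mono_left nhdsWithin_le_nhds
  exact hlim.congr' (hpos.mono fun t ht => Real.rpow_sub ht b a)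

lemma IsLittleOhPoly.exists_powComb {x : ℝ → ℝ} (hx : IsLittleOhPoly x) :
    ∃ h : ℝ →₀ ℝ, (fun t => x t - powComb h t) =o[𝓝[>] (0 : ℝ)] fun t => t := by
  obtain ⟨r, k, α, a, -, h⟩ := hx
  refine ⟨Finsupp.single 0 r + ∑ i, Finsupp.single (a i) (α i), h.congr_left fun t => ?_⟩
  simp only [map_add, map_sum, Pi.add_apply, Finset.sum_apply, powComb_single, Real.rpow_zero]
  ring

/-- A function with leading term `c * t ^ b`, `c > 0`, is positive near `0⁺`. -/
lemma eventually_pos_of_leading {z : ℝ → ℝ} {b c : ℝ} (hc : 0 < c)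
    (h : (fun t => z t - c * t ^ b) =o[𝓝[>] (0 : ℝ)] fun t => t ^ b) :
    ∀ᶠ t in 𝓝[>] (0 : ℝ), 0 < z t := by
  filter_upwards [h.bound (half_pos hc), eventually_mem_nhdsWithin] with t ht htpos
  have hp : 0 < t ^ b := Real.rpow_pos_of_pos htpos b
  rw [Real.norm_eq_abs, Real.norm_of_nonneg hp.le] at ht
  nlinarith [(abs_le.1 ht).1, mul_pos hc hp]

lemma isLittleO_or_eventually_sign {z : ℝ → ℝ} {h : ℝ →₀ ℝ}
    (hz : (fun t => z t - powComb h t) =o[𝓝[>] (0 : ℝ)] fun t => t) :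
    (z =o[𝓝[>] (0 : ℝ)] fun t => t) ∨ (∀ᶠ t in 𝓝[>] (0 : ℝ), z t < 0) ∨
      ∀ᶠ t in 𝓝[>] (0 : ℝ), 0 < z t := by
  by_cases hall : ∀ b ∈ h.support, 1 < b
  · left
    have hP : (fun t => powComb h t) =o[𝓝[>] (0 : ℝ)] fun t => t := by
      simp only [powComb_apply]
      refine IsLittleO.fun_sum fun b hb => ?_
      simpa using (rpow_isLittleO_rpow (hall b hb)).const_mul_left (h b)
    simpa using hz.add hP
  · right
    push Not at hall
    obtain ⟨b₁, hb₁, hb₁le⟩ := hall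
    obtain ⟨b, hb, hmin⟩ := h.support.exists_min_image id ⟨b₁, hb₁⟩
    have hb1 : b ≤ 1 := (hmin b₁ hb₁).trans hb₁le
    have hid : (fun t : ℝ => t) =O[𝓝[>] 0] fun t : ℝ => t ^ b := by
      rcases hb1.lt_or_eq with hlt | rfl
      · simpa using (rpow_isLittleO_rpow hlt).isBigO
      · simpa using isBigO_refl (fun t : ℝ => t) (𝓝[>] 0)
    have hrest : (fun t : ℝ => ∑ d ∈ h.support.erase b, h d * t ^ d)
        =o[𝓝[>] 0] fun t : ℝ => t ^ b := by
      refine IsLittleO.fun_sum fun d hd => ?_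
      rw [Finset.mem_erase] at hd
      exact (rpow_isLittleO_rpow (lt_of_le_of_ne (hmin d hd.2) hd.1.symm)).const_mul_left (h d)
    have hlead : (fun t => z t - h b * t ^ b) =o[𝓝[>] (0 : ℝ)] fun t => t ^ b := by
      refine ((hz.trans_isBigO hid).add hrest).congr_left fun t => ?_
      rw [powComb_apply, ← Finset.add_sum_erase _ _ hb]
      ring
    rcases (Finsupp.mem_support_iff.1 hb).lt_or_gt with hneg | hpos
    · left
      have := eventually_pos_of_leading (z := fun t => -z t) (neg_pos.2 hneg)
        (hlead.neg_left.congr_left fun t => by ring)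
      exact this.mono fun t ht => neg_pos.1 ht
    · exact Or.inr (eventually_pos_of_leading hpos hlead)

lemma exists_Ioo_of_eventually {p : ℝ → Prop} (h : ∀ᶠ t in 𝓝[>] (0 : ℝ), p t) :
    ∃ ε > (0 : ℝ), ∀ t ∈ Set.Ioo (0 : ℝ) ε, p t := by
  obtain ⟨ε, hε, hsub⟩ := mem_nhdsGT_iff_exists_Ioo_subset.1 h
  exact ⟨ε, hε, fun t ht => hsub ht⟩

/-- Trichotomy for the order on Fermat reals: for little-oh polynomials `x, y`, exactly one
of the following holds: (i) `x − y = o(t)`; (ii) not (i) and `x < y` eventually on `(0, ε)`;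
(iii) not (i) and `x > y` eventually on `(0, ε)`. -/
theorem littleOhPoly_trichotomy (x y : ℝ → ℝ)
    (hx : IsLittleOhPoly x) (hy : IsLittleOhPoly y) :
    let A := (fun t => x t - y t) =o[𝓝[>] (0 : ℝ)] fun t => t
    let B := ¬((fun t => x t - y t) =o[𝓝[>] (0 : ℝ)] fun t => t) ∧
      ∃ ε > (0 : ℝ), ∀ t ∈ Set.Ioo (0 : ℝ) ε, x t < y t
    let C := ¬((fun t => x t - y t) =o[𝓝[>] (0 : ℝ)] fun t => t) ∧
      ∃ ε > (0 : ℝ), ∀ t ∈ Set.Ioo (0 : ℝ) ε, x t > y t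
    (A ∧ ¬B ∧ ¬C) ∨ (¬A ∧ B ∧ ¬C) ∨ (¬A ∧ ¬B ∧ C) := by
  intro A B C
  have hBC : B → C → False := by
    rintro ⟨-, ε, hε, h₁⟩ ⟨-, δ, hδ, h₂⟩
    obtain ⟨t, ht0, ht⟩ := exists_between (lt_min hε hδ)
    exact lt_asymm (h₁ t ⟨ht0, ht.trans_le (min_le_left _ _)⟩)
      (h₂ t ⟨ht0, ht.trans_le (min_le_right _ _)⟩)
  by_cases hA : A
  · exact Or.inl ⟨hA, fun hB => hB.1 hA, fun hC => hC.1 hA⟩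
  obtain ⟨f, hf⟩ := hx.exists_powComb
  obtain ⟨g, hg⟩ := hy.exists_powComb
  have hz : (fun t => (x t - y t) - powComb (f - g) t) =o[𝓝[>] (0 : ℝ)] fun t => t := by
    refine (hf.sub hg).congr_left fun t => ?_
    rw [map_sub, Pi.sub_apply]
    ring
  rcases isLittleO_or_eventually_sign hz with h | h | h
  · exact absurd h hA
  · have hB : B := ⟨hA, exists_Ioo_of_eventually (h.mono fun t ht => sub_neg.1 ht)⟩
    exact Or.inr (Or.inl ⟨hA, hB, hBC hB⟩)
  · have hC : C := ⟨hA, exists_Ioo_of_eventually (h.mono fun t ht => sub_pos.1 ht)⟩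
    exact Or.inr (Or.inr ⟨hA, fun hB => hBC hB hC, hC⟩)
end

section
/- Taylor computation of Fermat extensions (one variable): let f : ℝ → ℝ be C^∞, let c ∈ ℝ, let m ∈ ℕ, and let δ : ℝ → ℝ satisfy δ(t) → 0 as t → 0⁺ and δ(t)^{m+1} = o(t) as t → 0⁺. Then f(c + δ(t)) − Σ_{i=0}^{m} (f^{(i)}(c)/i!)·δ(t)^i = o(t) as t → 0⁺, where f^{(i)} denotes the i-th iterated derivative of f. -/
/-!
Taylor's theorem in Peano form at order `m + 1`, composed with `c + δ t → c`, gives a remainder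
`o(δ ^ (m + 1))`. Both this remainder and the top term, a constant multiple of `δ ^ (m + 1)`,
are `o(t)` by nilpotency of `δ`, so the expansion can be truncated at order `m`.
-/

open Filter Asymptotics Topology

/-- Taylor computation of Fermat extensions (one variable): if `f : ℝ → ℝ` is `C^∞`,
`δ(t) → 0` as `t → 0⁺` and `δ(t)^{m+1} = o(t)`, then
`f(c + δ(t)) − ∑_{i=0}^{m} f^{(i)}(c)/i! · δ(t)^i = o(t)` as `t → 0⁺`. -/
theorem fermatExtension_taylor_one_var
    (f : ℝ → ℝ) (hf : ContDiff ℝ (⊤ : ℕ∞) f) (c : ℝ) (m : ℕ) (δ : ℝ → ℝ)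
    (hδ0 : Filter.Tendsto δ (𝓝[>] (0 : ℝ)) (𝓝 0))
    (hδnil : (fun t => δ t ^ (m + 1)) =o[𝓝[>] (0 : ℝ)] fun t => t) :
    (fun t => f (c + δ t) -
        ∑ i ∈ Finset.range (m + 1), (iteratedDeriv i f c / (Nat.factorial i)) * δ t ^ i)
      =o[𝓝[>] (0 : ℝ)] fun t => t := by
  -- Expand one order further than the claim: the remainder is then `o(δ ^ (m + 1))`.
  have hT := taylor_isLittleO_univ (x₀ := c) (n := m + 1) (hf.of_le (by exact_mod_cast le_top))
  have hc : Tendsto (fun t => c + δ t) (𝓝[>] (0 : ℝ)) (𝓝 c) := by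
    simpa using hδ0.const_add c
  have hR := hT.comp_tendsto hc
  simp only [Function.comp_def, add_sub_cancel_left] at hR
  -- The extra Taylor term is a constant multiple of `δ ^ (m + 1)`.
  refine ((hR.trans hδnil).add (hδnil.const_mul_left
    (iteratedDeriv (m + 1) f c / (Nat.factorial (m + 1))))).congr_left fun t => ?_
  have hsum : taylorWithinEval f (m + 1) Set.univ c (c + δ t) =
      ∑ i ∈ Finset.range (m + 2), (iteratedDeriv i f c / (Nat.factorial i)) * δ t ^ i := by
    rw [taylor_within_apply]
    refine Finset.sum_congr rfl fun i _ => ?_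
    rw [iteratedDerivWithin_univ, add_sub_cancel_left, smul_eq_mul]
    ring
  rw [hsum, Finset.sum_range_succ _ (m + 1)]
  ring
end

section
/- Taylor computation of Fermat extensions (several variables): let f : ℝ^n → ℝ^m be C^∞, let c ∈ ℝ^n, let m ∈ ℕ, and let δ : ℝ → ℝ^n satisfy δ(t) → 0 as t → 0⁺ and ‖δ(t)‖^{m+1} = o(t) as t → 0⁺. Then f(c + δ(t)) − Σ_{i=0}^{m} (1/i!)·D^i f(c)(δ(t), …, δ(t)) = o(t) as t → 0⁺, where D^i f(c) denotes the i-th iterated (multilinear) Fréchet derivative of f at c evaluated at i copies of δ(t). -/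
/-! Taylor's formula with integral remainder expresses the difference as
`(N!)⁻¹ ∫₀¹ (1 - s)^N D^{N+1}f(c + s δ(t))(δ(t), …, δ(t)) ds`. Since `D^{N+1}f` is continuous at `c`,
its norm is bounded on a ball around `c`; this ball contains the segment from `c` to `c + δ(t)` once
`t` is small. Hence the difference is `O(‖δ(t)‖^{N+1})`, which is `o(t)` by hypothesis. -/

open Filter Asymptotics Topology

/-- Taylor computation of Fermat extensions (several variables): if `f : ℝ^n → ℝ^m` is
`C^∞`, `δ(t) → 0` as `t → 0⁺` and `‖δ(t)‖^{N+1} = o(t)`, then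
`f(c + δ(t)) − ∑_{i=0}^{N} (1/i!) · Dⁱf(c)(δ(t), …, δ(t)) = o(t)` as `t → 0⁺`. -/
theorem fermatExtension_taylor_multi_var {n m : ℕ}
    (f : EuclideanSpace ℝ (Fin n) → EuclideanSpace ℝ (Fin m))
    (hf : ContDiff ℝ (⊤ : ℕ∞) f) (c : EuclideanSpace ℝ (Fin n)) (N : ℕ)
    (δ : ℝ → EuclideanSpace ℝ (Fin n))
    (hδ0 : Filter.Tendsto δ (𝓝[>] (0 : ℝ)) (𝓝 0))
    (hδnil : (fun t => ‖δ t‖ ^ (N + 1)) =o[𝓝[>] (0 : ℝ)] fun t => t) :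
    (fun t => f (c + δ t) -
        ∑ i ∈ Finset.range (N + 1),
          ((Nat.factorial i : ℝ)⁻¹) • iteratedFDeriv ℝ i f c (fun _ => δ t))
      =o[𝓝[>] (0 : ℝ)] fun t => t := by
  refine IsBigO.trans_isLittleO ?_ hδnil
  have hcont : Continuous (iteratedFDeriv ℝ (N + 1) f) :=
    hf.continuous_iteratedFDeriv (by exact_mod_cast le_top)
  set C : ℝ := ‖iteratedFDeriv ℝ (N + 1) f c‖ + 1 with hC
  have hev : ∀ᶠ z in 𝓝 c, ‖iteratedFDeriv ℝ (N + 1) f z‖ < C :=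
    hcont.norm.continuousAt.eventually_lt continuousAt_const (by simp [hC])
  obtain ⟨r, hr, hball⟩ := Metric.eventually_nhds_iff.1 hev
  have hsmall : ∀ᶠ t in 𝓝[>] (0 : ℝ), ‖δ t‖ < r := by
    simpa using hδ0.eventually (Metric.ball_mem_nhds 0 hr)
  refine IsBigO.of_bound ((N.factorial : ℝ)⁻¹ * C) ?_
  filter_upwards [hsmall] with t ht
  have hT := map_add_eq_sum_add_integral_iteratedFDeriv (n := N) (x := c) (y := δ t)
    (fun s _ => hf.contDiffAt.of_le (by exact_mod_cast le_top))
  rw [hT, add_sub_cancel_left, norm_smul, norm_inv, Real.norm_natCast, mul_assoc]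
  gcongr
  have hbound : ∀ s ∈ Set.uIoc (0 : ℝ) 1,
      ‖(1 - s) ^ N • iteratedFDeriv ℝ (N + 1) f (c + s • δ t) (fun _ => δ t)‖
        ≤ C * ‖‖δ t‖ ^ (N + 1)‖ := by
    intro s hs
    rw [Set.uIoc_of_le zero_le_one] at hs
    have hdist : dist (c + s • δ t) c < r := by
      rw [dist_self_add_left, norm_smul, Real.norm_of_nonneg hs.1.le]
      exact (mul_le_of_le_one_left (norm_nonneg _) hs.2).trans_lt ht
    have hop : ‖iteratedFDeriv ℝ (N + 1) f (c + s • δ t) (fun _ => δ t)‖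
        ≤ C * ‖δ t‖ ^ (N + 1) :=
      (ContinuousMultilinearMap.le_of_opNorm_le (hball hdist).le _).trans_eq (by simp)
    have hpow : ‖(1 - s) ^ N‖ ≤ 1 := by
      rw [norm_pow, Real.norm_of_nonneg (by linarith [hs.2])]
      exact pow_le_one₀ (by linarith [hs.2]) (by linarith [hs.1])
    rw [norm_smul, norm_pow ‖δ t‖, norm_norm]
    exact (mul_le_of_le_one_left (norm_nonneg _) hpow).trans hop
  simpa using intervalIntegral.norm_integral_le_of_norm_le_const hbound
end
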